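/- arXiv:2509.18931 — 2 statements merged into one kernel-verified Lean document; each statement's English description precedes it below -/
import Mathlib

section
/- For any sequence k = k(n) of natural numbers with k(n) → ∞ as n → ∞, the pair sum over single-gap pairs sharing few edges converges to 4: Σ_{s=0}^{k(n)} c_{s,1} → 4 as n → ∞. -/
open MeasureTheory Filter

namespace RandomHypercube

/-- Index of a (potential) hypercube edge: the lower endpoint `A` together with the
direction `i` that is added, representing the edge from `A` to `A ∪ {i}`. -/
abbrev EdgeIdx (n : ℕ) := Finset (Fin n) × Fin n

/-- The sample space: an i.i.d. Uniform[0,1] weight for each edge index. -/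
abbrev CubeOmega (n : ℕ) := EdgeIdx n → ℝ

/-- The product of uniform measures on [0,1], one for each edge. -/
noncomputable def cubeMeasure (n : ℕ) : Measure (CubeOmega n) :=
  Measure.pi fun _ => (volume : Measure ℝ).restrict (Set.Icc 0 1)

/-- The vertex visited by the direct path associated to the permutation `σ`
just before taking its `j`-th step: the image under `σ` of `{0, …, j-1}`. -/
def initSeg (n : ℕ) (σ : Equiv.Perm (Fin n)) (j : Fin n) : Finset (Fin n) :=
  (Finset.univ.filter fun i => i < j).image σ

/-- The edge used in the `j`-th step of the direct path associated to `σ`. -/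
def pathEdge (n : ℕ) (σ : Equiv.Perm (Fin n)) (j : Fin n) : EdgeIdx n :=
  (initSeg n σ j, σ j)

/-- The direct path associated to `σ` is accessible if its successive edge
weights are strictly increasing. -/
def Accessible (n : ℕ) (σ : Equiv.Perm (Fin n)) (ω : CubeOmega n) : Prop :=
  StrictMono fun j : Fin n => ω (pathEdge n σ j)

/-- The number of accessible direct paths from `∅` to `[n]`. -/
noncomputable def X (n : ℕ) (ω : CubeOmega n) : ℕ :=
  Nat.card {σ : Equiv.Perm (Fin n) // Accessible n σ ω}


/-- The set of steps `j` at which the direct paths of `σ` and `σ'` use the same edge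
(shared edges necessarily occur at the same level in both paths). -/
def sharedSteps (n : ℕ) (σ σ' : Equiv.Perm (Fin n)) : Finset (Fin n) :=
  Finset.univ.filter fun j => pathEdge n σ j = pathEdge n σ' j

/-- Given the sorted list `l` of steps (levels) of the shared edges, the gap vector:
the number of edges before the first shared edge, strictly between consecutive shared
edges, and after the last shared edge. -/
def gapsOfList (n : ℕ) (l : List ℕ) : List ℕ :=
  List.zipWith (fun a b => b - a) (0 :: l.map (· + 1)) (l ++ [n])

/-- The gap vector of the direct path of `σ'` relative to that of `σ`. -/
def gapVector (n : ℕ) (σ σ' : Equiv.Perm (Fin n)) : List ℕ :=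
  gapsOfList n (((sharedSteps n σ σ').sort (· ≤ ·)).map Fin.val)

/-- The number of (nontrivial) gaps between the direct paths of `σ` and `σ'`:
the number of nonzero entries of the gap vector. -/
def numGaps (n : ℕ) (σ σ' : Equiv.Perm (Fin n)) : ℕ :=
  ((gapVector n σ σ').filter (· != 0)).length

/-- The probability that the direct paths of `σ` and `σ'` are both accessible. -/
noncomputable def pairProb (n : ℕ) (σ σ' : Equiv.Perm (Fin n)) : ℝ :=
  (cubeMeasure n {ω | Accessible n σ ω ∧ Accessible n σ' ω}).toReal

/-- `c n s g`: the sum, over all ordered pairs of direct paths sharing exactly `s`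
edges with `g` gaps, of the probability that both paths are accessible. -/
noncomputable def c (n s g : ℕ) : ℝ :=
  ∑ p ∈ Finset.univ.filter
      (fun p : Equiv.Perm (Fin n) × Equiv.Perm (Fin n) =>
        (sharedSteps n p.1 p.2).card = s ∧ numGaps n p.1 p.2 = g),
    pairProb n p.1 p.2

/-- `w m`: the number of direct paths from `∅` to `[m]` in the `m`-dimensional hypercube
that are edge-disjoint from the canonical path (the identity permutation). -/
noncomputable def w (m : ℕ) : ℕ :=
  Nat.card {σ : Equiv.Perm (Fin m) // sharedSteps m σ 1 = ∅}

end RandomHypercube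

/-!
A pair of paths with a single gap of length `m = n - s` shares every edge except those of a block of
`m` consecutive steps, and there are `s + 1` positions for the block. All orders of the `n + m`
weights of the two paths are equally likely; the event that both paths are accessible prescribes the
weak order by level, in which the `2 * m` edges of the block are tied, and then the order of each of
the two halves of the tie class, so it has probability `(2 * m)! / (m! * m! * (n + m)!)`. Left
multiplication reduces the count of pairs to that of permutations of the block which share no edge
with the identity, which gives

  `c n s 1 = (s + 1) * (w m / m!) * (2 * m).choose m / (n + m).choose m`.

A permutation of `m` points sharing the `j`-th edge with the identity preserves `{x | x < j}` and
`{x | j < x}`, so at most `∑ j, j! * (m - 1 - j)! = O((m - 1)!)` permutations share an edge, and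
`w m / m! → 1`. For fixed `s` the quotient of binomial coefficients tends to `2⁻ˢ`, and it is at
most `(9 / 10) ^ s` as long as `s ≤ 8 * m`; dominated convergence gives the limit
`∑ s, (s + 1) * 2⁻ˢ = 4` for this range. When `8 * m < s` the quotient decays geometrically in `m`,
and the dangerous case `m = 1` is absent because `w 1 = 0`; the terms with `2 ≤ m` contribute
`O(1 / n)`.
-/

namespace RandomHypercube

section RandomOrder

open ProbabilityTheory

variable {ι α β : Type*}

/-- The weight configurations whose values on `A` increase strictly with the label `r`. Elements of
`A` with equal labels are not compared, so `r` encodes a weak order on `A`. -/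
def orderedOn [LT α] (A : Finset ι) (r : ι → α) : Set (ι → ℝ) :=
  {ω | ∀ x ∈ A, ∀ y ∈ A, r x < r y → ω x < ω y}

/-- An event is exchangeable on `A` if it is preserved by every permutation of the coordinates in
`A`. -/
def ExchangeableOn (A : Finset ι) (B : Set (ι → ℝ)) : Prop :=
  ∀ g : Equiv.Perm ι, (∀ x ∉ A, g x = x) → ∀ ω ∈ B, ω ∘ g ∈ B

theorem orderedOn_mono [LT α] {A S : Finset ι} (hAS : A ⊆ S) (r : ι → α) :
    orderedOn S r ⊆ orderedOn A r :=
  fun _ h x hx y hy ↦ h x (hAS hx) y (hAS hy)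

theorem measurableSet_orderedOn [LT α] (A : Finset ι) (r : ι → α) :
    MeasurableSet (orderedOn A r) := by
  have : orderedOn A r = ⋂ x ∈ A, ⋂ y ∈ A, ⋂ _ : r x < r y, {ω : ι → ℝ | ω x < ω y} := by
    ext ω; simp [orderedOn]
  rw [this]
  exact A.measurableSet_biInter fun x _ ↦ A.measurableSet_biInter fun y _ ↦
    .iInter fun _ ↦ measurableSet_lt (measurable_pi_apply x) (measurable_pi_apply y)

theorem exchangeableOn_univ (A : Finset ι) : ExchangeableOn A Set.univ :=
  fun _ _ _ _ ↦ trivial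

theorem ExchangeableOn.comp_mem_iff {A : Finset ι} {B : Set (ι → ℝ)} (hB : ExchangeableOn A B)
    {g : Equiv.Perm ι} (hg : ∀ x ∉ A, g x = x) (ω : ι → ℝ) : ω ∘ g ∈ B ↔ ω ∈ B := by
  refine ⟨fun h ↦ ?_, hB g hg ω⟩
  have hback := hB g.symm (fun x hx ↦ g.symm_apply_eq.2 (hg x hx).symm) _ h
  rwa [Function.comp_assoc, g.self_comp_symm, Function.comp_id] at hback

theorem ExchangeableOn.inter {A : Finset ι} {B C : Set (ι → ℝ)} (hB : ExchangeableOn A B)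
    (hC : ExchangeableOn A C) : ExchangeableOn A (B ∩ C) :=
  fun g hg ω hω ↦ ⟨hB g hg ω hω.1, hC g hg ω hω.2⟩

theorem exchangeableOn_orderedOn_of_subset [LT α] {A S : Finset ι} {r : ι → α} (hAS : A ⊆ S)
    (hr : ∀ x ∈ A, ∀ y ∈ A, r x = r y) : ExchangeableOn A (orderedOn S r) := by
  intro g hg ω hω
  have hgA : ∀ x ∈ A, g x ∈ A := fun x hx ↦ by
    by_contra hgx
    exact hgx ((g.injective (hg _ hgx)).symm ▸ hx)
  have hgS : ∀ x ∈ S, g x ∈ S ∧ r (g x) = r x := fun x hx ↦ by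
    by_cases hxA : x ∈ A
    · exact ⟨hAS (hgA x hxA), hr _ (hgA x hxA) _ hxA⟩
    · simp [hg x hxA, hx]
  intro x hx y hy hxy
  exact hω _ (hgS x hx).1 _ (hgS y hy).1 (by rwa [(hgS x hx).2, (hgS y hy).2])

theorem exchangeableOn_orderedOn_of_disjoint [LT α] {A S : Finset ι} (hAS : Disjoint A S)
    (r : ι → α) : ExchangeableOn A (orderedOn S r) := by
  intro g hg ω hω x hx y hy hxy
  have hgS : ∀ z ∈ S, g z = z := fun z hz ↦ hg z (Finset.disjoint_right.1 hAS hz)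
  simpa [hgS x hx, hgS y hy] using hω x hx y hy hxy

theorem exists_strictMono_comp_equiv [LinearOrder α] {A : Finset ι} {r : ι → α}
    (hr : Set.InjOn r A) : ∃ e : Fin A.card ≃ A, StrictMono fun j ↦ r (e j) := by
  let e : Fin A.card ≃ A := A.equivFin.symm
  refine ⟨(Tuple.sort fun j ↦ r (e j)).trans e,
    (Tuple.monotone_sort fun j ↦ r (e j)).strictMono_of_injective fun a b hab ↦ ?_⟩
  simpa [Subtype.val_inj] using hr (e _).2 (e _).2 hab

theorem mem_orderedOn_iff_strictMono [LinearOrder α] {A : Finset ι} {r : ι → α} {k : ℕ}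
    {e : Fin k ≃ A} (he : StrictMono fun j ↦ r (e j)) (ω : ι → ℝ) :
    ω ∈ orderedOn A r ↔ StrictMono fun j ↦ ω (e j) := by
  refine ⟨fun h a b hab ↦ h _ (e a).2 _ (e b).2 (he hab), fun h x hx y hy hxy ↦ ?_⟩
  obtain ⟨a, ha⟩ := e.surjective ⟨x, hx⟩
  obtain ⟨b, hb⟩ := e.surjective ⟨y, hy⟩
  have hab : r (e a) < r (e b) := by simpa [ha, hb] using hxy
  simpa [ha, hb] using h (he.lt_iff_lt.1 hab)

theorem existsUnique_perm_comp_mem_orderedOn [LinearOrder α] [DecidableEq ι] {A : Finset ι}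
    {r : ι → α} (hr : Set.InjOn r A) {ω : ι → ℝ} (hω : Function.Injective ω) :
    ∃! g : Equiv.Perm A, ω ∘ Equiv.Perm.ofSubtype g ∈ orderedOn A r := by
  obtain ⟨e, he⟩ := exists_strictMono_comp_equiv hr
  obtain ⟨e', he'⟩ := exists_strictMono_comp_equiv hω.injOn
  simp only [mem_orderedOn_iff_strictMono he, Function.comp_apply,
    Equiv.Perm.ofSubtype_apply_coe]
  refine ⟨e.symm.trans e', by simpa using he', fun g hg ↦ ?_⟩
  have hrange : ∀ f : Fin A.card ≃ A, Set.range (fun j ↦ ω (f j)) = ω '' A := fun f ↦ by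
    change Set.range (ω ∘ Subtype.val ∘ f) = _
    rw [Set.range_comp, f.surjective.range_comp, Subtype.range_val]
  have heq := (hg.range_inj he').1 ((hrange (e.trans g)).trans (hrange e').symm)
  ext x
  obtain ⟨j, rfl⟩ := e.surjective x
  simpa using hω (congrFun heq j)

theorem orderedOn_inter_orderedOn_eq [DecidableEq ι] [LinearOrder α] [LinearOrder β]
    {P Q : Finset ι} {r : ι → α} {κ : α → β} (hκ : Monotone κ)
    (hties : ∀ x ∈ P ∪ Q, ∀ y ∈ P ∪ Q,
      κ (r x) = κ (r y) ↔ x = y ∨ x ∈ symmDiff P Q ∧ y ∈ symmDiff P Q) :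
    orderedOn P r ∩ orderedOn Q r =
      orderedOn (P ∪ Q) (κ ∘ r) ∩ orderedOn (P \ Q) r ∩ orderedOn (Q \ P) r := by
  have hdiff : ∀ {z}, z ∈ symmDiff P Q ↔ z ∈ P ∧ z ∉ Q ∨ z ∈ Q ∧ z ∉ P := Finset.mem_symmDiff
  ext ω
  constructor
  · rintro ⟨hP, hQ⟩
    refine ⟨⟨fun x hx y hy hxy ↦ ?_, orderedOn_mono Finset.sdiff_subset r hP⟩,
      orderedOn_mono Finset.sdiff_subset r hQ⟩
    have hlt : r x < r y := hκ.reflect_lt hxy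
    have hcommon : x ∈ P ∧ y ∈ P ∨ x ∈ Q ∧ y ∈ Q := by
      have := (hties x hx y hy).not.1 hxy.ne
      grind
    exact hcommon.elim (fun h ↦ hP x h.1 y h.2 hlt) fun h ↦ hQ x h.1 y h.2 hlt
  · rintro ⟨⟨hPQ, hP⟩, hQ⟩
    constructor <;> intro x hx y hy hxy <;>
      obtain hlt | heq := (hκ hxy.le).lt_or_eq
    · exact hPQ x (by grind) y (by grind) hlt
    · have := (hties x (by grind) y (by grind)).1 heq
      exact hP x (by grind) y (by grind) hxy
    · exact hPQ x (by grind) y (by grind) hlt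
    · have := (hties x (by grind) y (by grind)).1 heq
      exact hQ x (by grind) y (by grind) hxy

variable [Fintype ι] (ν : Measure ℝ) [IsProbabilityMeasure ν]

theorem measurePreserving_comp_perm (g : Equiv.Perm ι) :
    MeasurePreserving (fun ω : ι → ℝ ↦ ω ∘ g) (.pi fun _ ↦ ν) (.pi fun _ ↦ ν) :=
  measurePreserving_arrowCongr' (fun _ ↦ ν) (fun _ ↦ ν) g.symm (.refl ℝ) fun _ ↦ .id ν

variable [NullSingletonClass ν]

theorem ae_pi_ne {a b : ι} (hab : a ≠ b) :
    ∀ᵐ ω ∂Measure.pi fun _ : ι ↦ ν, ω a ≠ ω b := by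
  have hlaw : Measure.map (fun ω : ι → ℝ ↦ (ω a, ω b)) (.pi fun _ ↦ ν) = ν.prod ν := by
    have hindep := (iIndepFun_pi (μ := fun _ : ι ↦ ν) (X := fun _ ↦ id)
      fun _ ↦ aemeasurable_id).indepFun hab
    exact ((indepFun_iff_map_prod_eq_prod_map_map (measurable_pi_apply a).aemeasurable
      (measurable_pi_apply b).aemeasurable).1 hindep).trans
      (congrArg₂ Measure.prod (measurePreserving_eval _ a).map_eq
        (measurePreserving_eval _ b).map_eq)
  have hdiag : ∀ᵐ z ∂ν.prod ν, z.1 ≠ z.2 := by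
    refine (Measure.ae_prod_iff_ae_ae
      (measurableSet_eq_fun measurable_fst measurable_snd).compl).2 ?_
    exact ae_of_all _ fun x ↦ by simpa [eq_comm] using Measure.ae_ne ν x
  rw [← hlaw] at hdiag
  exact ae_of_ae_map (f := fun ω : ι → ℝ ↦ (ω a, ω b)) (by fun_prop) hdiag

theorem ae_pi_injective : ∀ᵐ ω ∂Measure.pi fun _ : ι ↦ ν, Function.Injective ω := by
  have h : ∀ᵐ ω ∂Measure.pi fun _ : ι ↦ ν, ∀ a b, a ≠ b → ω a ≠ ω b := by
    simp only [ae_all_iff]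
    exact fun a b ↦ ae_pi_ne ν
  exact h.mono fun ω hω a b ↦ not_imp_not.1 (hω a b)

theorem ExchangeableOn.measureReal_eq [LinearOrder α] {A : Finset ι} {r : ι → α}
    (hr : Set.InjOn r A) {B : Set (ι → ℝ)} (hB : ExchangeableOn A B) (hBm : MeasurableSet B) :
    (Measure.pi fun _ ↦ ν).real B =
      A.card.factorial * (Measure.pi fun _ ↦ ν).real (B ∩ orderedOn A r) := by
  classical
  set μ := Measure.pi fun _ : ι ↦ ν
  let act (g : Equiv.Perm A) (ω : ι → ℝ) : ι → ℝ := ω ∘ Equiv.Perm.ofSubtype g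
  -- Exactly one permutation of `A` sorts an injective `ω`, so the sets `D g` partition `B` a.e.
  let D (g : Equiv.Perm A) : Set (ι → ℝ) := B ∩ act g ⁻¹' orderedOn A r
  have hact : ∀ g, MeasurePreserving (act g) μ μ :=
    fun g ↦ measurePreserving_comp_perm ν (Equiv.Perm.ofSubtype g)
  have hD_eq : ∀ g, D g = act g ⁻¹' (B ∩ orderedOn A r) := fun g ↦ by
    ext ω
    exact and_congr_left fun _ ↦
      (hB.comp_mem_iff (fun x ↦ Equiv.Perm.ofSubtype_apply_of_not_mem g) ω).symm
  have hmeas : MeasurableSet (B ∩ orderedOn A r) := hBm.inter (measurableSet_orderedOn A r)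
  have hcover : B =ᵐ[μ] ⋃ g ∈ Finset.univ, D g := by
    filter_upwards [ae_pi_injective ν] with ω hω
    obtain ⟨g, hg, -⟩ := existsUnique_perm_comp_mem_orderedOn hr hω
    refine propext ⟨fun h ↦ Set.mem_biUnion (Finset.mem_univ g) ⟨h, hg⟩, fun h ↦ ?_⟩
    obtain ⟨_, -, hωB, -⟩ := Set.mem_iUnion₂.1 h
    exact hωB
  have hdisj : Pairwise (Function.onFun (AEDisjoint μ) D) := fun g g' hne ↦ by
    refine measure_mono_null (fun ω hω ↦ ?_) (ae_iff.1 (ae_pi_injective ν))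
    exact fun hinj ↦ hne
      ((existsUnique_perm_comp_mem_orderedOn hr hinj).unique hω.1.2 hω.2.2)
  rw [measureReal_congr hcover, measureReal_biUnion_finset₀ (hdisj.set_pairwise _)
    fun g _ ↦ hD_eq g ▸ ((hact g).measurable hmeas).nullMeasurableSet]
  rw [Finset.sum_congr rfl fun g _ ↦ by
    rw [hD_eq, (hact g).measureReal_preimage hmeas.nullMeasurableSet]]
  simp [Fintype.card_perm]

theorem measureReal_orderedOn_of_unique_tie_class [LinearOrder α] {A S : Finset ι} {r : ι → α}
    (hAS : A ⊆ S) (hr : ∀ x ∈ S, ∀ y ∈ S, r x = r y ↔ x = y ∨ x ∈ A ∧ y ∈ A) :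
    (Measure.pi fun _ ↦ ν).real (orderedOn S r) = A.card.factorial / S.card.factorial := by
  -- Refining `r` by an enumeration `t` of all indices breaks the ties and yields a total order `q`.
  let t : ι → Fin (Fintype.card ι) := Fintype.equivFin ι
  have ht : Function.Injective t := (Fintype.equivFin ι).injective
  let q : ι → α ×ₗ Fin (Fintype.card ι) := fun x ↦ toLex (r x, t x)
  have hq : Function.Injective q := fun x y hxy ↦ ht (congrArg (fun z ↦ (ofLex z).2) hxy)
  have hrefine : orderedOn S q = orderedOn S r ∩ orderedOn A t := by
    ext ω
    simp only [orderedOn, Set.mem_inter_iff, Set.mem_ofPred_eq, q, Prod.Lex.toLex_lt_toLex]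
    refine ⟨fun h ↦ ⟨fun x hx y hy hxy ↦ h x hx y hy (.inl hxy), fun x hx y hy hxy ↦ ?_⟩,
      fun h x hx y hy hxy ↦ hxy.elim (h.1 x hx y hy) fun ⟨hreq, hlt⟩ ↦ ?_⟩
    · exact h x (hAS hx) y (hAS hy)
        (.inr ⟨(hr x (hAS hx) y (hAS hy)).2 (.inr ⟨hx, hy⟩), hxy⟩)
    · obtain rfl | ⟨hxA, hyA⟩ := (hr x hx y hy).1 hreq
      · exact absurd hlt (lt_irrefl _)
      · exact h.2 x hxA y hyA hlt
  have hexch : ExchangeableOn A (orderedOn S r) :=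
    exchangeableOn_orderedOn_of_subset hAS fun x hx y hy ↦
      (hr x (hAS hx) y (hAS hy)).2 (.inr ⟨hx, hy⟩)
  have htotal := (exchangeableOn_univ S).measureReal_eq ν hq.injOn .univ
  have htie := hexch.measureReal_eq ν ht.injOn (measurableSet_orderedOn S r)
  rw [Set.univ_inter, probReal_univ, hrefine] at htotal
  rw [htie, eq_div_iff (by positivity), mul_assoc, mul_comm (Measure.real _ _), ← htotal, mul_one]

theorem measureReal_orderedOn_inter_orderedOn [DecidableEq ι] [LinearOrder α] [LinearOrder β]
    {P Q : Finset ι} {r : ι → α} (hP : Set.InjOn r P) (hQ : Set.InjOn r Q) {κ : α → β}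
    (hκ : Monotone κ)
    (hties : ∀ x ∈ P ∪ Q, ∀ y ∈ P ∪ Q,
      κ (r x) = κ (r y) ↔ x = y ∨ x ∈ symmDiff P Q ∧ y ∈ symmDiff P Q) :
    (Measure.pi fun _ ↦ ν).real (orderedOn P r ∩ orderedOn Q r) =
      (symmDiff P Q).card.factorial /
        ((P \ Q).card.factorial * (Q \ P).card.factorial * (P ∪ Q).card.factorial) := by
  have hsub : symmDiff P Q ⊆ P ∪ Q := symmDiff_le_sup
  have hexch : ∀ M ⊆ symmDiff P Q, ExchangeableOn M (orderedOn (P ∪ Q) (κ ∘ r)) :=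
    fun M hM ↦ exchangeableOn_orderedOn_of_subset (hM.trans hsub) fun x hx y hy ↦
      (hties x (hsub (hM hx)) y (hsub (hM hy))).2 (.inr ⟨hM hx, hM hy⟩)
  have hcollapsed := measureReal_orderedOn_of_unique_tie_class ν (r := κ ∘ r) hsub hties
  have hsplitP := (hexch (P \ Q) le_sup_left).measureReal_eq ν (hP.mono Finset.sdiff_subset)
    (measurableSet_orderedOn _ _)
  have hsplitQ := ((hexch (Q \ P) le_sup_right).inter
    (exchangeableOn_orderedOn_of_disjoint disjoint_sdiff_sdiff r)).measureReal_eq ν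
    (hQ.mono Finset.sdiff_subset)
    ((measurableSet_orderedOn _ _).inter (measurableSet_orderedOn (P \ Q) r))
  rw [← orderedOn_inter_orderedOn_eq hκ hties] at hsplitQ
  rw [hsplitQ, hcollapsed] at hsplitP
  field_simp at hsplitP ⊢
  linarith

end RandomOrder

section DirectPaths

variable {n : ℕ}

theorem card_initSeg (σ : Equiv.Perm (Fin n)) (j : Fin n) : (initSeg n σ j).card = j := by
  rw [initSeg, Finset.card_image_of_injective _ σ.injective, Finset.filter_gt_eq_Iio, Fin.card_Iio]

/-- The set of edges of the direct path of `σ`. -/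
def pathEdges (n : ℕ) (σ : Equiv.Perm (Fin n)) : Finset (EdgeIdx n) :=
  Finset.univ.image (pathEdge n σ)

/-- The level of an edge: the size of its lower endpoint, which is the index of the step at which a
direct path can use the edge. -/
def edgeLevel (e : EdgeIdx n) : ℕ :=
  e.1.card

theorem edgeLevel_pathEdge (σ : Equiv.Perm (Fin n)) (j : Fin n) :
    edgeLevel (pathEdge n σ j) = j :=
  card_initSeg σ j

theorem pathEdge_injective (σ : Equiv.Perm (Fin n)) : Function.Injective (pathEdge n σ) :=
  fun _ _ h ↦ σ.injective (congrArg Prod.snd h)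

theorem injOn_edgeLevel_pathEdges (σ : Equiv.Perm (Fin n)) :
    Set.InjOn edgeLevel (pathEdges n σ : Set (EdgeIdx n)) := by
  intro x hx y hy hxy
  simp only [pathEdges, Finset.coe_image, Finset.coe_univ, Set.image_univ] at hx hy
  obtain ⟨a, rfl⟩ := hx
  obtain ⟨b, rfl⟩ := hy
  rw [edgeLevel_pathEdge, edgeLevel_pathEdge] at hxy
  rw [Fin.ext hxy]

theorem mem_pathEdges {σ : Equiv.Perm (Fin n)} {e : EdgeIdx n} :
    e ∈ pathEdges n σ ↔ ∃ j, pathEdge n σ j = e := by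
  simp [pathEdges]

theorem mem_sharedSteps {σ σ' : Equiv.Perm (Fin n)} {j : Fin n} :
    j ∈ sharedSteps n σ σ' ↔ pathEdge n σ j = pathEdge n σ' j := by
  simp [sharedSteps]

theorem sharedSteps_comm (σ σ' : Equiv.Perm (Fin n)) :
    sharedSteps n σ σ' = sharedSteps n σ' σ := by
  ext j; simp only [mem_sharedSteps, eq_comm]

theorem pathEdge_mem_pathEdges_iff {σ σ' : Equiv.Perm (Fin n)} {j : Fin n} :
    pathEdge n σ j ∈ pathEdges n σ' ↔ j ∈ sharedSteps n σ σ' := by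
  rw [mem_pathEdges, mem_sharedSteps]
  refine ⟨fun ⟨j', h⟩ ↦ ?_, fun h ↦ ⟨j, h.symm⟩⟩
  have hlevel : j' = j := Fin.ext (by simpa only [edgeLevel_pathEdge] using congrArg edgeLevel h)
  exact (hlevel ▸ h).symm

theorem accessible_iff_mem_orderedOn (σ : Equiv.Perm (Fin n)) (ω : CubeOmega n) :
    Accessible n σ ω ↔ ω ∈ orderedOn (pathEdges n σ) edgeLevel := by
  simp only [orderedOn, Set.mem_ofPred_eq, mem_pathEdges, forall_exists_index,
    forall_apply_eq_imp_iff, edgeLevel_pathEdge]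
  rfl

theorem pathEdges_sdiff (σ σ' : Equiv.Perm (Fin n)) :
    pathEdges n σ \ pathEdges n σ' = (sharedSteps n σ σ')ᶜ.image (pathEdge n σ) := by
  ext e
  simp only [Finset.mem_sdiff, mem_pathEdges, Finset.mem_image, Finset.mem_compl]
  constructor
  · rintro ⟨⟨j, rfl⟩, hj⟩
    exact ⟨j, fun h ↦ hj (mem_pathEdges.1 (pathEdge_mem_pathEdges_iff.2 h)), rfl⟩
  · rintro ⟨j, hj, rfl⟩
    exact ⟨⟨j, rfl⟩, fun h ↦ hj (pathEdge_mem_pathEdges_iff.1 (mem_pathEdges.2 h))⟩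

theorem card_pathEdges (σ : Equiv.Perm (Fin n)) : (pathEdges n σ).card = n := by
  rw [pathEdges, Finset.card_image_of_injective _ (pathEdge_injective σ), Finset.card_fin]

theorem card_pathEdges_sdiff (σ σ' : Equiv.Perm (Fin n)) :
    (pathEdges n σ \ pathEdges n σ').card = (sharedSteps n σ σ')ᶜ.card := by
  rw [pathEdges_sdiff, Finset.card_image_of_injective _ (pathEdge_injective σ)]

theorem card_pathEdges_union (σ σ' : Equiv.Perm (Fin n)) :
    (pathEdges n σ ∪ pathEdges n σ').card = n + (sharedSteps n σ σ')ᶜ.card := by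
  rw [← Finset.card_sdiff_add_card, card_pathEdges, card_pathEdges_sdiff, add_comm]

theorem card_symmDiff_pathEdges (σ σ' : Equiv.Perm (Fin n)) :
    (symmDiff (pathEdges n σ) (pathEdges n σ')).card = 2 * (sharedSteps n σ σ')ᶜ.card := by
  rw [symmDiff_def, Finset.sup_eq_union, Finset.card_union_of_disjoint disjoint_sdiff_sdiff,
    card_pathEdges_sdiff, card_pathEdges_sdiff, sharedSteps_comm σ', two_mul]

theorem mem_symmDiff_pathEdges_iff {σ σ' : Equiv.Perm (Fin n)} {e : EdgeIdx n}
    (he : e ∈ pathEdges n σ ∪ pathEdges n σ') :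
    e ∈ symmDiff (pathEdges n σ) (pathEdges n σ') ↔
      ∃ j ∉ sharedSteps n σ σ', (j : ℕ) = edgeLevel e := by
  wlog h : e ∈ pathEdges n σ generalizing σ σ'
  · rw [symmDiff_comm, sharedSteps_comm]
    rw [Finset.union_comm] at he
    exact this he ((Finset.mem_union.1 he).resolve_right h)
  obtain ⟨j, rfl⟩ := mem_pathEdges.1 h
  simp [Finset.mem_symmDiff, h, pathEdge_mem_pathEdges_iff, edgeLevel_pathEdge, Fin.val_inj]

/-- The block of the `m` consecutive steps `i, …, i + m - 1`; it is the set of steps at which two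
paths with a single gap of length `m` after `i` shared edges differ. -/
def gapBlock (n i m : ℕ) : Finset (Fin n) :=
  Finset.univ.filter fun j ↦ i ≤ j ∧ j < i + m

theorem mem_gapBlock {i m : ℕ} {j : Fin n} : j ∈ gapBlock n i m ↔ i ≤ j ∧ j < i + m := by
  simp [gapBlock]

theorem card_gapBlock {i m : ℕ} (him : i + m ≤ n) : (gapBlock n i m).card = m := by
  have : (gapBlock n i m).map Fin.valEmbedding = Finset.Ico i (i + m) := by
    ext a
    simp only [Finset.mem_map, mem_gapBlock, Fin.valEmbedding_apply, Finset.mem_Ico]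
    exact ⟨fun ⟨_, hj, h⟩ ↦ h ▸ hj, fun ha ↦ ⟨⟨a, by lia⟩, ha, rfl⟩⟩
  rw [← Finset.card_map, this, Nat.card_Ico, Nat.add_sub_cancel_left]

/-- The map on levels that merges the levels `i, …, i + m - 1` of a block into one. -/
def collapseBlock (i m a : ℕ) : ℕ :=
  if i ≤ a ∧ a < i + m then i else a

theorem monotone_collapseBlock (i m : ℕ) : Monotone (collapseBlock i m) :=
  fun a b hab ↦ by grind [collapseBlock]

theorem collapseBlock_edgeLevel_eq_iff {i m : ℕ} (him : i + m ≤ n) {σ σ' : Equiv.Perm (Fin n)}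
    (h : sharedSteps n σ σ' = (gapBlock n i m)ᶜ) {x y : EdgeIdx n}
    (hx : x ∈ pathEdges n σ ∪ pathEdges n σ') (hy : y ∈ pathEdges n σ ∪ pathEdges n σ') :
    collapseBlock i m (edgeLevel x) = collapseBlock i m (edgeLevel y) ↔
      x = y ∨ x ∈ symmDiff (pathEdges n σ) (pathEdges n σ') ∧
        y ∈ symmDiff (pathEdges n σ) (pathEdges n σ') := by
  set P := pathEdges n σ
  set Q := pathEdges n σ'
  have hblock : ∀ e ∈ P ∪ Q, e ∈ symmDiff P Q ↔ i ≤ edgeLevel e ∧ edgeLevel e < i + m := by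
    intro e he
    rw [mem_symmDiff_pathEdges_iff he, h]
    simp only [Finset.mem_compl, not_not, mem_gapBlock]
    exact ⟨fun ⟨_, hj, hje⟩ ↦ hje ▸ hj, fun hj ↦ ⟨⟨edgeLevel e, by lia⟩, hj, rfl⟩⟩
  have hcommon : ∀ e ∈ P ∪ Q, e ∉ symmDiff P Q → e ∈ P := fun e he heD ↦ by
    simp only [Finset.mem_union, Finset.mem_symmDiff] at he heD
    tauto
  by_cases hxy : x ∉ symmDiff P Q ∧ y ∉ symmDiff P Q
  · have := (injOn_edgeLevel_pathEdges σ).eq_iff (hcommon x hx hxy.1) (hcommon y hy hxy.2)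
    grind [collapseBlock]
  · grind [collapseBlock]

theorem pairProb_eq_of_sharedSteps_eq {i m : ℕ} (him : i + m ≤ n) {σ σ' : Equiv.Perm (Fin n)}
    (h : sharedSteps n σ σ' = (gapBlock n i m)ᶜ) :
    pairProb n σ σ' =
      (2 * m).factorial / (m.factorial * m.factorial * (n + m).factorial) := by
  have hevent : {ω | Accessible n σ ω ∧ Accessible n σ' ω} =
      orderedOn (pathEdges n σ) edgeLevel ∩ orderedOn (pathEdges n σ') edgeLevel :=
    Set.ext fun ω ↦
      and_congr (accessible_iff_mem_orderedOn σ ω) (accessible_iff_mem_orderedOn σ' ω)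
  have hcard : (sharedSteps n σ σ')ᶜ.card = m := by rw [h, compl_compl, card_gapBlock him]
  have : IsProbabilityMeasure ((volume : Measure ℝ).restrict (Set.Icc 0 1)) := ⟨by simp⟩
  have hprob := measureReal_orderedOn_inter_orderedOn
    ((volume : Measure ℝ).restrict (Set.Icc 0 1)) (injOn_edgeLevel_pathEdges σ)
    (injOn_edgeLevel_pathEdges σ') (monotone_collapseBlock i m)
    fun x hx y hy ↦ collapseBlock_edgeLevel_eq_iff him h hx hy
  rwa [card_symmDiff_pathEdges, card_pathEdges_sdiff, card_pathEdges_sdiff, card_pathEdges_union,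
    sharedSteps_comm σ', hcard, ← hevent] at hprob

end DirectPaths

section GapVector

/-- The number of nonzero gaps left by the increasing list of levels `l` in `b, …, n - 1`; the gap
vector itself starts at `b = 0`, and the general starting level serves for inductions. -/
def numGapsFrom (n b : ℕ) (l : List ℕ) : ℕ :=
  ((List.zipWith (fun a b ↦ b - a) (b :: l.map (· + 1)) (l ++ [n])).filter (· != 0)).length

theorem numGapsFrom_nil (n b : ℕ) : numGapsFrom n b [] = if n ≤ b then 0 else 1 := by
  simp only [numGapsFrom, List.map_nil, List.nil_append, List.zipWith_cons_cons,
    List.zipWith_nil_left]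
  grind

theorem numGapsFrom_cons (n b a : ℕ) (l : List ℕ) :
    numGapsFrom n b (a :: l) = (if a ≤ b then 0 else 1) + numGapsFrom n (a + 1) l := by
  simp only [numGapsFrom, List.map_cons, List.cons_append, List.zipWith_cons_cons,
    List.filter_cons]
  grind

theorem numGapsFrom_eq_zero_iff {n b : ℕ} {l : List ℕ} (hl : l.SortedLT)
    (hmem : ∀ x ∈ l, b ≤ x ∧ x < n) :
    numGapsFrom n b l = 0 ↔ ∀ x, b ≤ x → x < n → x ∈ l := by
  induction l generalizing b with
  | nil =>
    refine ⟨by grind [numGapsFrom_nil], fun h ↦ ?_⟩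
    have := h b
    grind [numGapsFrom_nil]
  | cons a l ih =>
    obtain ⟨hal, htail⟩ := List.pairwise_cons.1 hl.pairwise
    have hba := (hmem a List.mem_cons_self).1
    have := ih htail.sortedLT (b := a + 1) (by grind)
    refine ⟨by grind [numGapsFrom_cons], fun h ↦ ?_⟩
    have := h b
    grind [numGapsFrom_cons]

theorem numGapsFrom_eq_one_iff {n b : ℕ} {l : List ℕ} (hl : l.SortedLT)
    (hmem : ∀ x ∈ l, b ≤ x ∧ x < n) :
    numGapsFrom n b l = 1 ↔ ∃ i m, b ≤ i ∧ 0 < m ∧ i + m ≤ n ∧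
      ∀ x, b ≤ x → x < n → (x ∈ l ↔ ¬(i ≤ x ∧ x < i + m)) := by
  induction l generalizing b with
  | nil =>
    rw [numGapsFrom_nil]
    constructor
    · intro h
      exact ⟨b, n - b, by grind⟩
    · grind
  | cons a l ih =>
    obtain ⟨hal, htail⟩ := List.pairwise_cons.1 hl.pairwise
    have ha := hmem a List.mem_cons_self
    have hlmem : ∀ x ∈ l, a + 1 ≤ x ∧ x < n := by grind
    rw [numGapsFrom_cons]
    obtain rfl | hba := ha.1.eq_or_lt
    · rw [if_pos le_rfl, zero_add, ih htail.sortedLT hlmem]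
      constructor
      · rintro ⟨i, m, hi⟩
        exact ⟨i, m, by grind⟩
      · rintro ⟨i, m, hi⟩
        exact ⟨i, m, by grind⟩
    · rw [if_neg hba.not_ge, Nat.add_eq_left, numGapsFrom_eq_zero_iff htail.sortedLT hlmem]
      constructor
      · intro h
        exact ⟨b, a - b, by grind⟩
      · rintro ⟨i, m, -, -, -, h⟩
        have := h b
        have := h a
        grind

theorem numGaps_eq_one_iff {n : ℕ} {σ σ' : Equiv.Perm (Fin n)} :
    numGaps n σ σ' = 1 ↔
      ∃ i m, 0 < m ∧ i + m ≤ n ∧ sharedSteps n σ σ' = (gapBlock n i m)ᶜ := by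
  set l := ((sharedSteps n σ σ').sort (· ≤ ·)).map Fin.val
  have hl : l.SortedLT :=
    ((Finset.sortedLT_sort (sharedSteps n σ σ')).pairwise.map Fin.val fun _ _ h ↦ h).sortedLT
  have hmem : ∀ j : Fin n, (j : ℕ) ∈ l ↔ j ∈ sharedSteps n σ σ' := fun j ↦ by
    simp [l, Fin.val_inj]
  have hlt : ∀ x ∈ l, 0 ≤ x ∧ x < n := fun x hx ↦ by
    obtain ⟨j, -, rfl⟩ := List.mem_map.1 hx
    exact ⟨Nat.zero_le _, j.2⟩
  have hset : ∀ i m, (∀ x, x < n → (x ∈ l ↔ ¬(i ≤ x ∧ x < i + m))) ↔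
      sharedSteps n σ σ' = (gapBlock n i m)ᶜ := fun i m ↦ by
    simp only [Finset.ext_iff, Finset.mem_compl, mem_gapBlock, ← hmem, Fin.forall_iff]
  have hfrom : numGaps n σ σ' = numGapsFrom n 0 l := rfl
  simp only [hfrom, numGapsFrom_eq_one_iff hl hlt, hset, Nat.zero_le, true_and,
    true_imp_iff]

end GapVector

section SharedSteps

open Equiv

theorem sharedSteps_mul_mul {n : ℕ} (ρ σ σ' : Perm (Fin n)) :
    sharedSteps n (ρ * σ) (ρ * σ') = sharedSteps n σ σ' := by
  have himage : ∀ τ j, initSeg n (ρ * τ) j = (initSeg n τ j).image ρ := fun τ j ↦ by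
    rw [initSeg, initSeg, Finset.image_image]; rfl
  ext j
  simp only [mem_sharedSteps, pathEdge, Prod.mk.injEq, himage, Perm.mul_apply,
    (Finset.image_injective ρ.injective).eq_iff, ρ.injective.eq_iff]

theorem mem_sharedSteps_one {m : ℕ} {σ : Perm (Fin m)} {j : Fin m} :
    j ∈ sharedSteps m σ 1 ↔ (∀ x, σ x < j ↔ x < j) ∧ σ j = j := by
  simp only [mem_sharedSteps, pathEdge, Prod.mk.injEq, Perm.one_apply, initSeg]
  refine and_congr_left fun _ ↦ ?_
  rw [Finset.ext_iff, σ.surjective.forall]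
  simp [eq_comm, iff_comm]

theorem mem_sharedSteps_one_iff_cmp {m : ℕ} {σ : Perm (Fin m)} {j : Fin m} :
    j ∈ sharedSteps m σ 1 ↔ (cmp · j) ∘ σ = (cmp · j) := by
  rw [mem_sharedSteps_one]
  constructor
  · rintro ⟨hlt, hj⟩
    funext x
    obtain hx | rfl | hx := lt_trichotomy x j
    · rw [Function.comp_apply, ((hlt x).2 hx).cmp_eq_lt, hx.cmp_eq_lt]
    · rw [Function.comp_apply, hj]
    · have hσx : j < σ x := (not_lt.1 ((hlt x).not.2 hx.not_gt)).lt_of_ne fun h ↦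
        hx.ne (σ.injective (hj.trans h))
      rw [Function.comp_apply, hσx.cmp_eq_gt, hx.cmp_eq_gt]
  · intro h
    have hcmp : ∀ x, cmp (σ x) j = cmp x j := congrFun h
    exact ⟨fun x ↦ lt_iff_lt_of_cmp_eq_cmp (hcmp x),
      (eq_iff_eq_of_cmp_eq_cmp (hcmp j)).2 rfl⟩

theorem card_filter_mem_sharedSteps_one {m : ℕ} (j : Fin m) :
    (Finset.univ.filter fun σ : Perm (Fin m) ↦ j ∈ sharedSteps m σ 1).card =
      (j : ℕ).factorial * (m - 1 - j).factorial := by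
  have hord : (Finset.univ : Finset Ordering) = {.lt, .eq, .gt} := rfl
  -- The permutations in question stabilize the coloring `cmp · j` of `Fin m`.
  simp only [mem_sharedSteps_one_iff_cmp]
  rw [← Fintype.card_subtype, DomMulAct.stabilizer_card, hord]
  simp [Fintype.card_subtype, cmp_eq_lt_iff, cmp_eq_eq_iff, cmp_eq_gt_iff, Finset.filter_eq',
    Finset.filter_gt_eq_Iio, Finset.filter_lt_eq_Ioi]

theorem factorial_succ_mul_factorial_succ_le (a b : ℕ) :
    (a + 1).factorial * (b + 1).factorial ≤ (a + b + 1).factorial := by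
  induction a with
  | zero => simp
  | succ a ih =>
    calc (a + 2).factorial * (b + 1).factorial
        = (a + 2) * ((a + 1).factorial * (b + 1).factorial) := by
          rw [Nat.factorial_succ (a + 1), mul_assoc]
      _ ≤ (a + b + 2) * (a + b + 1).factorial := by gcongr; lia
      _ = (a + 1 + b + 1).factorial := by rw [← Nat.factorial_succ]; congr 1; lia

theorem sum_factorial_mul_factorial_sub_le (M : ℕ) :
    ∑ a ∈ Finset.range (M + 1), a.factorial * (M - a).factorial ≤ 3 * M.factorial := by
  obtain _ | M := M
  · simp
  have hinner : ∀ a ∈ Finset.range M,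
      (a + 1).factorial * (M + 1 - (a + 1)).factorial ≤ M.factorial := fun a ha ↦ by
    obtain ⟨b, rfl⟩ := Nat.exists_eq_add_of_lt (Finset.mem_range.1 ha)
    convert factorial_succ_mul_factorial_succ_le a b using 3
    lia
  have hsum := Finset.sum_le_card_nsmul _ _ _ hinner
  rw [Finset.card_range, smul_eq_mul] at hsum
  calc ∑ a ∈ Finset.range (M + 2), a.factorial * (M + 1 - a).factorial
      = (∑ a ∈ Finset.range M, (a + 1).factorial * (M + 1 - (a + 1)).factorial) +
          2 * (M + 1).factorial := by
        rw [Finset.sum_range_succ, Finset.sum_range_succ', Nat.sub_self, Nat.sub_zero,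
          Nat.factorial_zero]
        ring
    _ ≤ M * M.factorial + 2 * (M + 1).factorial := by gcongr
    _ ≤ 3 * (M + 1).factorial := by rw [Nat.factorial_succ]; lia

theorem w_eq_card_filter (m : ℕ) :
    w m = (Finset.univ.filter fun σ : Perm (Fin m) ↦ sharedSteps m σ 1 = ∅).card := by
  rw [w, Nat.card_eq_fintype_card, Fintype.card_subtype]

theorem w_le_factorial (m : ℕ) : w m ≤ m.factorial := by
  rw [w_eq_card_filter]
  exact (Finset.card_le_univ _).trans_eq (by rw [Fintype.card_perm, Fintype.card_fin])

theorem w_one : w 1 = 0 := by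
  rw [w_eq_card_filter, Finset.card_eq_zero, Finset.filter_eq_empty_iff]
  intro σ _
  simp [Subsingleton.elim σ 1, sharedSteps]

theorem factorial_succ_le_w_add (m : ℕ) :
    (m + 1).factorial ≤ w (m + 1) + 3 * m.factorial := by
  let S (j : Fin (m + 1)) : Finset (Perm (Fin (m + 1))) :=
    Finset.univ.filter fun σ ↦ j ∈ sharedSteps (m + 1) σ 1
  have hS : (Finset.univ.filter fun σ ↦ sharedSteps (m + 1) σ 1 ≠ ∅) = Finset.univ.biUnion S := by
    ext σ
    simp [S, ← Finset.nonempty_iff_ne_empty, Finset.Nonempty]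
  calc (m + 1).factorial
      = w (m + 1) + (Finset.univ.biUnion S).card := by
        rw [w_eq_card_filter, ← hS, Finset.card_filter_add_card_filter_not, Finset.card_univ,
          Fintype.card_perm, Fintype.card_fin]
    _ ≤ w (m + 1) + ∑ j : Fin (m + 1), (j : ℕ).factorial * (m - j).factorial := by
        gcongr
        refine Finset.card_biUnion_le.trans_eq (Finset.sum_congr rfl fun j _ ↦ ?_)
        exact card_filter_mem_sharedSteps_one j
    _ ≤ w (m + 1) + 3 * m.factorial := by
        gcongr
        rw [Fin.sum_univ_eq_sum_range fun a ↦ a.factorial * (m - a).factorial]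
        exact sum_factorial_mul_factorial_sub_le m

theorem tendsto_w_div_factorial :
    Tendsto (fun m ↦ (w m : ℝ) / m.factorial) atTop (nhds 1) := by
  rw [← tendsto_add_atTop_iff_nat 1]
  have hlower : Tendsto (fun m : ℕ ↦ 1 - 3 * (1 / ((m : ℝ) + 1))) atTop (nhds 1) := by
    simpa using (tendsto_one_div_add_atTop_nhds_zero_nat.const_mul (3 : ℝ)).const_sub 1
  refine tendsto_of_tendsto_of_tendsto_of_le_of_le hlower tendsto_const_nhds
    (fun m ↦ ?_) fun m ↦ ?_
  · have h : (((m + 1).factorial : ℕ) : ℝ) ≤ w (m + 1) + 3 * m.factorial :=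
      mod_cast factorial_succ_le_w_add m
    rw [le_div_iff₀ (by positivity)]
    rw [Nat.factorial_succ] at h ⊢
    push_cast at h ⊢
    field_simp
    linarith
  · exact div_le_one_of_le₀ (Nat.cast_le.2 (w_le_factorial _)) (by positivity)

end SharedSteps

section Counting

open Equiv

variable {n i m : ℕ}

theorem apply_mem_sharedSteps_extendDomain_one_iff {p : Fin n → Prop} [DecidablePred p]
    (e : Fin m ≃o Subtype p) {σ : Perm (Fin m)} {j : Fin m} :
    (e j : Fin n) ∈ sharedSteps n (σ.extendDomain e.toEquiv) 1 ↔ j ∈ sharedSteps m σ 1 := by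
  have happly : ∀ a, σ.extendDomain e.toEquiv (e a) = e (σ a) :=
    σ.extendDomain_apply_image e.toEquiv
  simp only [mem_sharedSteps_one, happly, Subtype.val_inj, e.injective.eq_iff]
  refine and_congr_left fun _ ↦ ⟨fun h x ↦ ?_, fun h x ↦ ?_⟩
  · simpa only [happly, Subtype.coe_lt_coe, e.lt_iff_lt] using h (e x)
  · by_cases hx : p x
    · obtain ⟨y, hy⟩ := e.surjective ⟨x, hx⟩
      obtain rfl : (e y : Fin n) = x := congrArg Subtype.val hy
      simpa only [happly, Subtype.coe_lt_coe, e.lt_iff_lt] using h y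
    · rw [Perm.extendDomain_apply_not_subtype _ _ hx]

theorem mem_sharedSteps_extendDomain_one_of_notMem_gapBlock
    (e : Fin m ≃ {x // x ∈ gapBlock n i m}) (σ : Perm (Fin m)) {j : Fin n}
    (hj : j ∉ gapBlock n i m) : j ∈ sharedSteps n (σ.extendDomain e) 1 := by
  refine mem_sharedSteps_one.2 ⟨fun x ↦ ?_, Perm.extendDomain_apply_not_subtype _ _ hj⟩
  by_cases hx : x ∈ gapBlock n i m
  · rw [Perm.extendDomain_apply_subtype _ _ hx]
    have hσx := mem_gapBlock.1 (e (σ (e.symm ⟨x, hx⟩))).2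
    rw [mem_gapBlock] at hx hj
    simp only [Fin.lt_def]
    lia
  · rw [Perm.extendDomain_apply_not_subtype _ _ hx]

theorem sharedSteps_extendDomain_one_eq_compl_gapBlock_iff
    (e : Fin m ≃o {x // x ∈ gapBlock n i m}) {σ : Perm (Fin m)} :
    sharedSteps n (σ.extendDomain e.toEquiv) 1 = (gapBlock n i m)ᶜ ↔ sharedSteps m σ 1 = ∅ := by
  simp only [Finset.eq_empty_iff_forall_notMem, ← apply_mem_sharedSteps_extendDomain_one_iff e]
  constructor
  · intro h j hj
    rw [h, Finset.mem_compl] at hj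
    exact hj (e j).2
  · intro h
    ext j
    rw [Finset.mem_compl]
    refine ⟨fun hj hblock ↦ ?_, mem_sharedSteps_extendDomain_one_of_notMem_gapBlock e.toEquiv σ⟩
    obtain ⟨a, ha⟩ := e.surjective ⟨j, hblock⟩
    exact h a (by rwa [ha])

theorem exists_extendDomain_eq {α β : Type*} {p : β → Prop} [DecidablePred p]
    (f : α ≃ Subtype p) {τ : Perm β} (hτ : ∀ x, ¬p x → τ x = x) :
    ∃ σ : Perm α, σ.extendDomain f = τ := by
  let σ := (Perm.subtypeEquivSubtypePerm p).symm ⟨τ, hτ⟩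
  refine ⟨f.symm.permCongr σ, Perm.ext fun x ↦ ?_⟩
  by_cases hx : p x
  · simp [Perm.extendDomain_apply_subtype _ _ hx, σ]
  · rw [Perm.extendDomain_apply_not_subtype _ _ hx, hτ x hx]

theorem card_filter_sharedSteps_one_eq_compl_gapBlock (him : i + m ≤ n) :
    (Finset.univ.filter fun τ : Perm (Fin n) ↦ sharedSteps n τ 1 = (gapBlock n i m)ᶜ).card =
      w m := by
  rw [w_eq_card_filter]
  let e : Fin m ≃o {x // x ∈ gapBlock n i m} :=
    (gapBlock n i m).orderIsoOfFin (card_gapBlock him)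
  symm
  refine Finset.card_nbij (Perm.extendDomain · e.toEquiv) (fun σ hσ ↦ ?_)
    (Perm.extendDomainHom_injective e.toEquiv).injOn fun τ hτ ↦ ?_
  · simpa [sharedSteps_extendDomain_one_eq_compl_gapBlock_iff e] using hσ
  · have hτ : sharedSteps n τ 1 = (gapBlock n i m)ᶜ := by simpa using hτ
    obtain ⟨σ, rfl⟩ := exists_extendDomain_eq e.toEquiv (τ := τ) fun x hx ↦
      (mem_sharedSteps_one.1 (hτ ▸ Finset.mem_compl.2 hx)).2
    exact ⟨σ, by simpa using (sharedSteps_extendDomain_one_eq_compl_gapBlock_iff e).1 hτ, rfl⟩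

theorem card_filter_sharedSteps_eq (S : Finset (Fin n)) :
    (Finset.univ.filter fun p : Perm (Fin n) × Perm (Fin n) ↦ sharedSteps n p.1 p.2 = S).card =
      n.factorial * (Finset.univ.filter fun τ : Perm (Fin n) ↦ sharedSteps n τ 1 = S).card := by
  have hperm : n.factorial = (Finset.univ : Finset (Perm (Fin n))).card := by
    rw [Finset.card_univ, Fintype.card_perm, Fintype.card_fin]
  rw [hperm, ← Finset.card_product]
  refine Finset.card_nbij' (fun p ↦ (p.2, p.2⁻¹ * p.1)) (fun q ↦ (q.1 * q.2, q.1)) ?_ ?_ ?_ ?_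
  · rintro ⟨σ, σ'⟩ hp
    have := sharedSteps_mul_mul σ'⁻¹ σ σ'
    simp_all
  · rintro ⟨σ', τ⟩ hq
    have := sharedSteps_mul_mul σ' τ 1
    simp_all
  · rintro ⟨σ, σ'⟩ -
    simp
  · rintro ⟨σ', τ⟩ -
    simp

theorem injOn_compl_gapBlock (hm : 0 < m) :
    Set.InjOn (fun i ↦ (gapBlock n i m)ᶜ) {i | i + m ≤ n} := by
  intro i hi j hj hij
  have h : ∀ x, x ∈ gapBlock n i m ↔ x ∈ gapBlock n j m := by
    simpa only [compl_inj_iff, Finset.ext_iff] using hij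
  have him : i + m ≤ n := hi
  have hjm : j + m ≤ n := hj
  have hi := h ⟨i, by lia⟩
  have hj := h ⟨j, by lia⟩
  simp only [mem_gapBlock] at hi hj
  lia

theorem c_one_eq_zero {s : ℕ} (hs : n ≤ s) : c n s 1 = 0 := by
  rw [c, Finset.filter_false_of_mem, Finset.sum_empty]
  rintro p - ⟨hcard, hgap⟩
  obtain ⟨i, m, hm, him, h⟩ := numGaps_eq_one_iff.1 hgap
  rw [h, Finset.card_compl, card_gapBlock him, Fintype.card_fin] at hcard
  lia

theorem card_eq_and_numGaps_eq_one_iff {s : ℕ} (hs : s < n) {σ σ' : Perm (Fin n)} :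
    (sharedSteps n σ σ').card = s ∧ numGaps n σ σ' = 1 ↔
      ∃ i ∈ Finset.range (s + 1), sharedSteps n σ σ' = (gapBlock n i (n - s))ᶜ := by
  rw [numGaps_eq_one_iff]
  constructor
  · rintro ⟨hcard, i, m, hm, him, h⟩
    rw [h, Finset.card_compl, card_gapBlock him, Fintype.card_fin] at hcard
    obtain rfl : m = n - s := by lia
    exact ⟨i, Finset.mem_range.2 (by lia), h⟩
  · rintro ⟨i, hi, h⟩
    have hin : i + (n - s) ≤ n := by have := Finset.mem_range.1 hi; lia
    refine ⟨?_, i, n - s, by lia, hin, h⟩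
    rw [h, Finset.card_compl, card_gapBlock hin, Fintype.card_fin]
    lia

/-- What the expected number of accessible ordered pairs of direct paths that differ only in a given
block of `m` steps would be if all `m!` orders of these steps gave edge-disjoint paths in the block,
namely `n! * m!` pairs times the probability `(2 * m)! / (m! * m! * (n + m)!)`. -/
noncomputable def gapWeight (n m : ℕ) : ℝ :=
  m.centralBinom / (n + m).choose m

theorem gapWeight_eq_factorial (n m : ℕ) :
    gapWeight n m = n.factorial * m.factorial *
      ((2 * m).factorial / (m.factorial * m.factorial * (n + m).factorial)) := by
  rw [gapWeight, Nat.centralBinom, Nat.cast_choose ℝ (by lia : m ≤ 2 * m),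
    Nat.cast_choose ℝ (by lia : m ≤ n + m), Nat.add_sub_cancel, two_mul, Nat.add_sub_cancel]
  field_simp

theorem sum_pairProb_of_sharedSteps_eq (him : i + m ≤ n) :
    ∑ p : Perm (Fin n) × Perm (Fin n) with sharedSteps n p.1 p.2 = (gapBlock n i m)ᶜ,
      pairProb n p.1 p.2 = gapWeight n m * (w m / m.factorial) := by
  rw [Finset.sum_congr rfl fun p hp ↦
      pairProb_eq_of_sharedSteps_eq him (Finset.mem_filter_univ p |>.1 hp),
    Finset.sum_const, card_filter_sharedSteps_eq,
    card_filter_sharedSteps_one_eq_compl_gapBlock him, nsmul_eq_mul, gapWeight_eq_factorial]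
  push_cast
  field_simp

theorem c_one_eq {s : ℕ} (hs : s < n) :
    c n s 1 = (s + 1) * gapWeight n (n - s) * (w (n - s) / (n - s).factorial) := by
  have hset : Finset.univ.filter (fun p : Perm (Fin n) × Perm (Fin n) ↦
        (sharedSteps n p.1 p.2).card = s ∧ numGaps n p.1 p.2 = 1) =
      (Finset.range (s + 1)).biUnion fun i ↦
        Finset.univ.filter fun p ↦ sharedSteps n p.1 p.2 = (gapBlock n i (n - s))ᶜ := by
    ext p
    simp only [Finset.mem_filter_univ, Finset.mem_biUnion, card_eq_and_numGaps_eq_one_iff hs]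
  have hle : ∀ i ∈ Finset.range (s + 1), i + (n - s) ≤ n := fun i hi ↦ by
    have := Finset.mem_range.1 hi
    lia
  rw [c, hset, Finset.sum_biUnion]
  · rw [Finset.sum_congr rfl fun i hi ↦ sum_pairProb_of_sharedSteps_eq (hle i hi),
      Finset.sum_const, Finset.card_range, nsmul_eq_mul, Nat.cast_succ, mul_assoc]
  · intro i hi j hj hij
    refine Finset.disjoint_filter.2 fun p _ hpi hpj ↦ hij ?_
    exact injOn_compl_gapBlock (by lia) (hle i hi) (hle j hj) (hpi.symm.trans hpj)

end Counting

section Asymptotics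

theorem hasSum_succ_mul_geometric {r : ℝ} (h₀ : 0 ≤ r) (h₁ : r < 1) :
    HasSum (fun s : ℕ ↦ (s + 1) * r ^ s) (1 / (1 - r) ^ 2) := by
  simpa using hasSum_choose_mul_geometric_of_norm_lt_one 1
    (by rwa [Real.norm_of_nonneg h₀] : ‖r‖ < 1)

theorem tendsto_sum_of_dominated_convergence {ι β G : Type*} [NormedAddCommGroup G]
    [CompleteSpace G] {l : Filter ι} {F : ι → Finset β} {f : ι → β → G} {g : β → G} {bound : β → ℝ}
    (hbound : Summable bound) (hF : ∀ b, ∀ᶠ i in l, b ∈ F i)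
    (hlim : ∀ b, Tendsto (f · b) l (nhds (g b))) (hle : ∀ i, ∀ b ∈ F i, ‖f i b‖ ≤ bound b) :
    Tendsto (fun i ↦ ∑ b ∈ F i, f i b) l (nhds (∑' b, g b)) := by
  obtain rfl | hl := l.eq_or_neBot
  · exact tendsto_bot
  have hnonneg : ∀ b, 0 ≤ bound b := fun b ↦ by
    obtain ⟨i, hi⟩ := (hF b).exists
    exact (norm_nonneg _).trans (hle i b hi)
  have hsum : ∀ i, ∑ b ∈ F i, f i b = ∑' b, Set.indicator (F i) (f i) b := fun i ↦
    sum_eq_tsum_indicator _ _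
  rw [funext hsum]
  refine tendsto_tsum_of_dominated_convergence hbound (fun b ↦ ?_) (.of_forall fun i b ↦ ?_)
  · refine (hlim b).congr' ?_
    filter_upwards [hF b] with i hi
    rw [Set.indicator_of_mem (Finset.mem_coe.2 hi)]
  · by_cases hb : b ∈ F i
    · rw [Set.indicator_of_mem (Finset.mem_coe.2 hb)]
      exact hle i b hb
    · rw [Set.indicator_of_notMem (mt Finset.mem_coe.1 hb), norm_zero]
      exact hnonneg b

theorem gapWeight_pos (n m : ℕ) : 0 < gapWeight n m := by
  have := m.centralBinom_pos
  have := Nat.choose_pos (Nat.le_add_left m n)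
  rw [gapWeight]
  positivity

theorem gapWeight_self (m : ℕ) : gapWeight m m = 1 := by
  rw [gapWeight, Nat.centralBinom, ← two_mul]
  exact div_self (mod_cast (Nat.centralBinom_pos m).ne')

theorem gapWeight_succ_left (n m : ℕ) :
    gapWeight (n + 1) m = gapWeight n m * ((n + 1) / (n + m + 1)) := by
  have hchoose : ((n + m).choose m : ℝ) * (n + m + 1) = (n + 1 + m).choose m * (n + 1) := by
    have := Nat.choose_mul_succ_eq (n + m) m
    rw [show n + m + 1 - m = n + 1 by lia, show n + m + 1 = n + 1 + m by lia] at this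
    exact_mod_cast (by rw [← this]; ring)
  have := Nat.choose_pos (Nat.le_add_left m n)
  have := Nat.choose_pos (Nat.le_add_left m (n + 1))
  rw [gapWeight, gapWeight, div_mul_div_comm, div_eq_div_iff (by positivity) (by positivity)]
  linear_combination (m.centralBinom : ℝ) * hchoose

theorem gapWeight_succ_right (n m : ℕ) :
    gapWeight n (m + 1) = gapWeight n m * (2 * (2 * m + 1) / (n + m + 1)) := by
  have hcentral : ((m : ℝ) + 1) * (m + 1).centralBinom = 2 * (2 * m + 1) * m.centralBinom :=
    mod_cast m.succ_mul_centralBinom_succ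
  have hchoose : ((n : ℝ) + m + 1) * (n + m).choose m = (n + (m + 1)).choose (m + 1) * (m + 1) :=
    mod_cast Nat.add_one_mul_choose_eq (n + m) m
  have := Nat.choose_pos (Nat.le_add_left m n)
  have := Nat.choose_pos (Nat.le_add_left (m + 1) n)
  rw [gapWeight, gapWeight, div_mul_div_comm, div_eq_div_iff (by positivity) (by positivity)]
  have hm : (m : ℝ) + 1 ≠ 0 := by positivity
  refine mul_left_cancel₀ hm ?_
  linear_combination (((n + m).choose m : ℝ) * (n + m + 1)) * hcentral +
    (m.centralBinom * (2 * (2 * m + 1)) : ℝ) * hchoose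

theorem gapWeight_two (n : ℕ) : gapWeight n 2 = 12 / ((n + 1) * (n + 2)) := by
  have hzero : gapWeight n 0 = 1 := by simp [gapWeight]
  rw [gapWeight_succ_right, gapWeight_succ_right, hzero]
  push_cast
  field_simp
  ring

theorem tendsto_gapWeight_add (s : ℕ) :
    Tendsto (fun m ↦ gapWeight (m + s) m) atTop (nhds ((1 / 2) ^ s)) := by
  induction s with
  | zero => simp [gapWeight_self]
  | succ s ih =>
    have hratio : Tendsto (fun m : ℕ ↦ ((s : ℝ) + 1 + 1 * m) / (s + 1 + 2 * m)) atTop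
        (nhds (1 / 2)) :=
      tendsto_add_mul_div_add_mul_atTop_nhds _ _ _ two_ne_zero
    rw [pow_succ]
    refine (ih.mul hratio).congr fun m ↦ ?_
    rw [← add_assoc m, gapWeight_succ_left]
    push_cast
    ring_nf

theorem gapWeight_add_le_pow {m s : ℕ} (hs : s ≤ 8 * m) :
    gapWeight (m + s) m ≤ (9 / 10) ^ s := by
  induction s with
  | zero => simp [gapWeight_self]
  | succ s ih =>
    have hs' : (s : ℝ) + 1 ≤ 8 * m := mod_cast hs
    rw [← add_assoc m, gapWeight_succ_left, pow_succ]
    refine mul_le_mul (ih (by lia)) ?_ (by positivity) (by positivity)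
    rw [div_le_div_iff₀ (by positivity) (by norm_num)]
    push_cast
    linarith

theorem gapWeight_add_two_le {n m : ℕ} (hm : 8 * (m + 2) ≤ n) :
    gapWeight n (m + 2) ≤ gapWeight n 2 * (1 / 2) ^ m := by
  induction m with
  | zero => simp
  | succ m ih =>
    have hm' : 8 * ((m : ℝ) + 3) ≤ n := mod_cast hm
    rw [show m + 1 + 2 = m + 2 + 1 by lia, gapWeight_succ_right, pow_succ, ← mul_assoc]
    have := (gapWeight_pos n 2).le
    refine mul_le_mul (ih (by lia)) ?_ (by positivity) (by positivity)
    rw [div_le_div_iff₀ (by positivity) two_pos]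
    push_cast
    linarith

theorem c_nonneg (n s g : ℕ) : 0 ≤ c n s g :=
  Finset.sum_nonneg fun _ _ ↦ ENNReal.toReal_nonneg

theorem c_one_le {n s : ℕ} (hs : s < n) : c n s 1 ≤ (s + 1) * gapWeight n (n - s) := by
  rw [c_one_eq hs]
  have := (gapWeight_pos n (n - s)).le
  exact mul_le_of_le_one_right (by positivity)
    (div_le_one_of_le₀ (Nat.cast_le.2 (w_le_factorial _)) (by positivity))

theorem c_one_le_of_le {n s : ℕ} (hs : s ≤ 8 * (n - s)) : c n s 1 ≤ (s + 1) * (9 / 10) ^ s := by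
  obtain hsn | hsn := lt_or_ge s n
  · refine (c_one_le hsn).trans ?_
    gcongr
    simpa only [Nat.sub_add_cancel hsn.le] using gapWeight_add_le_pow hs
  · rw [c_one_eq_zero hsn]
    positivity

theorem c_one_le_of_lt {n s : ℕ} (hsn : s < n) (hs : 8 * (n - s) < s) :
    c n s 1 ≤ 24 / (n + 1) * (1 / 2) ^ (n - 1 - s) := by
  obtain ⟨m, rfl⟩ := Nat.exists_eq_add_of_lt hsn
  rw [show s + m + 1 - s = m + 1 by lia] at hs
  rw [show s + m + 1 - 1 - s = m by lia]
  obtain _ | m := m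
  · rw [c_one_eq hsn, show s + 0 + 1 - s = 1 by lia, w_one, Nat.cast_zero, zero_div, mul_zero]
    positivity
  set n := s + (m + 1) + 1
  calc c n s 1
      ≤ (s + 1) * gapWeight n (m + 2) := by
        simpa only [show n - s = m + 2 by lia] using c_one_le hsn
    _ ≤ (n + 2) * (gapWeight n 2 * (1 / 2) ^ m) := by
        have := (gapWeight_pos n (m + 2)).le
        refine mul_le_mul ?_ (gapWeight_add_two_le (by lia)) this (by positivity)
        exact_mod_cast (by lia : s + 1 ≤ n + 2)
    _ = 24 / (n + 1) * (1 / 2) ^ (m + 1) := by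
        rw [gapWeight_two, pow_succ]
        field_simp
        norm_num

theorem tendsto_c_one (s : ℕ) :
    Tendsto (fun n ↦ c n s 1) atTop (nhds ((s + 1) * (1 / 2) ^ s)) := by
  rw [← tendsto_add_atTop_iff_nat s]
  have hlim := ((tendsto_gapWeight_add s).const_mul ((s : ℝ) + 1)).mul tendsto_w_div_factorial
  rw [mul_one] at hlim
  refine hlim.congr' ?_
  filter_upwards [eventually_gt_atTop 0] with m hm
  rw [c_one_eq (by lia), Nat.add_sub_cancel]

theorem tendsto_sum_c_one_of_le {k : ℕ → ℕ} (hk : Tendsto k atTop atTop) :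
    Tendsto (fun n ↦ ∑ s ∈ Finset.range (k n + 1) with s ≤ 8 * (n - s), c n s 1)
      atTop (nhds 4) := by
  have hfour := (hasSum_succ_mul_geometric (r := 1 / 2) (by norm_num) (by norm_num)).tsum_eq
  rw [show (4 : ℝ) = 1 / (1 - 1 / 2) ^ 2 by norm_num, ← hfour]
  refine tendsto_sum_of_dominated_convergence
    (hasSum_succ_mul_geometric (r := 9 / 10) (by norm_num) (by norm_num)).summable
    (fun s ↦ ?_) tendsto_c_one fun n s hs ↦ ?_
  · filter_upwards [hk.eventually_ge_atTop s, eventually_ge_atTop (2 * s)] with n hks hns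
    simp only [Finset.mem_filter, Finset.mem_range]
    lia
  · rw [Real.norm_of_nonneg (c_nonneg n s 1)]
    exact c_one_le_of_le (Finset.mem_filter.1 hs).2

theorem tendsto_sum_c_one_of_lt (k : ℕ → ℕ) :
    Tendsto (fun n ↦ ∑ s ∈ Finset.range (k n + 1) with ¬s ≤ 8 * (n - s), c n s 1)
      atTop (nhds 0) := by
  have hzero : Tendsto (fun n : ℕ ↦ 48 * (1 / ((n : ℝ) + 1))) atTop (nhds 0) := by
    simpa using tendsto_one_div_add_atTop_nhds_zero_nat.const_mul (48 : ℝ)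
  refine squeeze_zero (fun n ↦ Finset.sum_nonneg fun s _ ↦ c_nonneg n s 1) (fun n ↦ ?_) hzero
  calc ∑ s ∈ Finset.range (k n + 1) with ¬s ≤ 8 * (n - s), c n s 1
      ≤ ∑ s ∈ Finset.range n, 24 / ((n : ℝ) + 1) * (1 / 2) ^ (n - 1 - s) := by
        rw [← Finset.sum_filter_of_ne (p := (· < n)) fun s _ hs ↦
          lt_of_not_ge fun hns ↦ hs (c_one_eq_zero hns)]
        refine (Finset.sum_le_sum fun s hs ↦ ?_).trans
          (Finset.sum_le_sum_of_subset_of_nonneg (fun s hs ↦ ?_) fun s _ _ ↦ by positivity)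
        · simp only [Finset.mem_filter, not_le] at hs
          exact c_one_le_of_lt hs.2 hs.1.2
        · exact Finset.mem_range.2 (Finset.mem_filter.1 hs).2
    _ = 24 / ((n : ℝ) + 1) * ∑ s ∈ Finset.range n, (1 / 2) ^ s := by
        rw [← Finset.mul_sum, Finset.sum_range_reflect (fun s ↦ (1 / 2 : ℝ) ^ s)]
    _ ≤ 24 / ((n : ℝ) + 1) * 2 := by gcongr; exact sum_geometric_two_le n
    _ = 48 * (1 / ((n : ℝ) + 1)) := by ring

end Asymptotics

end RandomHypercube

open RandomHypercube in
/-- For any sequence `k(n) → ∞`, the pair sum over single-gap pairs sharing at most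
`k(n)` edges converges to `4` as `n → ∞`. -/
theorem sum_c_one_gap_few_shared_tendsto_four (k : ℕ → ℕ)
    (hk : Tendsto k atTop atTop) :
    Tendsto (fun n : ℕ => ∑ s ∈ Finset.range (k n + 1), c n s 1)
      atTop (nhds 4) := by
  have hlim := (tendsto_sum_c_one_of_le hk).add (tendsto_sum_c_one_of_lt k)
  rw [add_zero] at hlim
  exact hlim.congr fun n ↦ Finset.sum_filter_add_sum_filter_not _ _ _
end

section
/- For all integers k ≥ 1 and r ≥ 1, E[Z_{k,r}] = (1 − 2^{−r})^k, where Z_{k,r} = Σ_{i ∈ {1,…,r}^k} exp(−Σ_{j ∈ P(i)} Δ(j)). -/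
open MeasureTheory Filter

/-- The rate-1 exponential distribution: density `e^{-z}` on `(0, ∞)`. -/
noncomputable def expMeasure : Measure ℝ :=
  ((volume : Measure ℝ).restrict (Set.Ioi 0)).withDensity fun z =>
    ENNReal.ofReal (Real.exp (-z))

/-- A finite nonempty sequence of positive integers, encoded as (initial segment, last
entry). -/
abbrev SeqIdx := List ℕ+ × ℕ+

/-- `treeSum Δ k r = Z_{k,r} = Σ_{i ∈ {1,…,r}^k} exp(-Σ_{j ∈ P(i)} Δ(j))
= Σ_{i ∈ {1,…,r}^k} ∏_{ℓ=1}^{k} ∏_{j=1}^{i_ℓ} exp(-Δ(i_1,…,i_{ℓ-1},j))`,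
where `i ∈ {1,…,r}^k` is encoded as `i : Fin k → Fin r` via `i_ℓ = (i ℓ) + 1`. -/
noncomputable def treeSum {Ω : Type*} (Δ : SeqIdx → Ω → ℝ) (k r : ℕ) (ω : Ω) : ℝ :=
  ∑ i : Fin k → Fin r, ∏ ℓ : Fin k, ∏ j ∈ Finset.range ((i ℓ : ℕ) + 1),
    Real.exp (-(Δ ((List.ofFn fun m : Fin k => Nat.succPNat (i m)).take ℓ.val,
      Nat.succPNat j) ω))

/-!
By independence `E[exp(-Σ_{j ∈ P(i)} Δ(j))] = q ^ |P(i)|` with `q = E[exp(-Δ)]`, which is `1/2` for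
the exponential law. Since `|P(i)| = i_1 + ⋯ + i_k`, the sum over `i ∈ {1,…,r}^k` factors as
`(q + q^2 + ⋯ + q^r)^k`.
-/

open Finset
open ProbabilityTheory hiding expMeasure

section Predecessors

variable {k : ℕ}

/-- The element `(i_1, …, i_{ℓ-1}, j)` of the predecessor set of `(i_1, …, i_k)`, with all entries
(and the level `ℓ`) shifted down by one so as to start from `0`. -/
def predecessor (i : Fin k → ℕ) (ℓ : Fin k) (j : ℕ) : SeqIdx :=
  ((List.ofFn fun m => (i m).succPNat).take ℓ, j.succPNat)

theorem predecessor_injective2 (i : Fin k → ℕ) : Function.Injective2 (predecessor i) := by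
  intro ℓ ℓ' j j' h
  obtain ⟨hinit, hlast⟩ := Prod.mk.inj h
  have hlen := congrArg List.length hinit
  simp only [List.length_take, List.length_ofFn] at hlen
  exact ⟨by omega, Nat.succPNat_injective hlast⟩

/-- The predecessor set `P(i)`, where `i` is given by its entries minus one. -/
def predecessors (i : Fin k → ℕ) : Finset SeqIdx :=
  (univ.sigma fun ℓ => range (i ℓ + 1)).image fun p => predecessor i p.1 p.2

theorem sum_predecessors {M : Type*} [AddCommMonoid M] (i : Fin k → ℕ) (f : SeqIdx → M) :
    ∑ x ∈ predecessors i, f x = ∑ ℓ, ∑ j ∈ range (i ℓ + 1), f (predecessor i ℓ j) := by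
  rw [predecessors, sum_image, sum_sigma]
  rintro ⟨ℓ, j⟩ - ⟨ℓ', j'⟩ - h
  obtain ⟨rfl, rfl⟩ := predecessor_injective2 i h
  rfl

theorem card_predecessors (i : Fin k → ℕ) : #(predecessors i) = ∑ ℓ, (i ℓ + 1) := by
  rw [card_eq_sum_ones, sum_predecessors]
  simp only [sum_const, card_range, smul_eq_mul, mul_one]

end Predecessors

theorem sum_pow_card_predecessors {R : Type*} [CommSemiring R] (q : R) (k r : ℕ) :
    ∑ i : Fin k → Fin r, q ^ #(predecessors fun ℓ => (i ℓ : ℕ)) =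
      (∑ j ∈ range r, q ^ (j + 1)) ^ k := by
  simp only [card_predecessors, ← prod_pow_eq_pow_sum]
  rw [← Fin.sum_univ_eq_sum_range (fun j => q ^ (j + 1)), Fintype.sum_pow]

theorem treeSum_eq_sum_exp_neg_predecessors {Ω : Type*} (Δ : SeqIdx → Ω → ℝ)
    (k r : ℕ) (ω : Ω) : treeSum Δ k r ω =
      ∑ i : Fin k → Fin r, Real.exp (-∑ x ∈ predecessors fun ℓ => (i ℓ : ℕ), Δ x ω) := by
  simp only [treeSum, sum_predecessors, predecessor, ← sum_neg_distrib, Real.exp_sum]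

section Expectation

variable {Ω : Type*} [MeasurableSpace Ω] {μ : Measure Ω}

section ExponentialLaw

variable {X : Ω → ℝ} {t : ℝ}

theorem mgf_id_expMeasure (ht : t < 1) : mgf id expMeasure t = (1 - t)⁻¹ := by
  have density_smul_exp (z : ℝ) :
      (ENNReal.ofReal (Real.exp (-z))).toReal • Real.exp (t * z) = Real.exp ((t - 1) * z) := by
    rw [ENNReal.toReal_ofReal (Real.exp_pos _).le, smul_eq_mul, ← Real.exp_add]
    ring_nf
  calc mgf id expMeasure t = ∫ z in Set.Ioi 0, Real.exp ((t - 1) * z) := by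
        simp only [mgf, id_eq, expMeasure, ← density_smul_exp]
        exact integral_withDensity_eq_integral_toReal_smul (by fun_prop) (by simp) _
    _ = (1 - t)⁻¹ := by
        rw [integral_exp_mul_Ioi (by linarith), mul_zero, Real.exp_zero, neg_div, ← div_neg,
          neg_sub, one_div]

theorem mgf_of_hasLaw_expMeasure (hX : HasLaw X expMeasure μ) (ht : t < 1) :
    mgf X μ t = (1 - t)⁻¹ := by
  rw [← mgf_id_map hX.aemeasurable, hX.map_eq, mgf_id_expMeasure ht]

theorem mem_integrableExpSet_of_hasLaw_expMeasure (hX : HasLaw X expMeasure μ) (ht : t < 1) :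
    t ∈ integrableExpSet X μ := by
  by_contra hnot
  have hmgf : (1 - t)⁻¹ = 0 := (mgf_of_hasLaw_expMeasure hX ht).symm.trans (mgf_undef hnot)
  exact (inv_pos.2 (sub_pos.2 ht)).ne' hmgf

end ExponentialLaw

theorem mem_integrableExpSet_sum_of_iIndepFun {ι : Type*} {X : ι → Ω → ℝ} {t : ℝ}
    (hindep : iIndepFun X μ) (hX : ∀ i, AEMeasurable (X i) μ) {s : Finset ι}
    (ht : ∀ i ∈ s, t ∈ integrableExpSet (X i) μ) : t ∈ integrableExpSet (∑ i ∈ s, X i) μ := by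
  have := hindep.isProbabilityMeasure
  refine mgf_pos_iff.1 ?_
  rw [hindep.mgf_sum₀ hX]
  exact prod_pos fun i hi => mgf_pos (ht i hi)

theorem expectation_treeSum_general {Δ : SeqIdx → Ω → ℝ} (hindep : iIndepFun Δ μ)
    (hint : ∀ x, -1 ∈ integrableExpSet (Δ x) μ) {q : ℝ} (hq : ∀ x, mgf (Δ x) μ (-1) = q)
    (k r : ℕ) : ∫ ω, treeSum Δ k r ω ∂μ = (∑ j ∈ range r, q ^ (j + 1)) ^ k := by
  have := hindep.isProbabilityMeasure
  have hmeas x : AEMeasurable (Δ x) μ :=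
    aemeasurable_of_integrable_exp_mul (u := -1) (v := 0) (by norm_num) (hint x) (by simp)
  have exp_neg_sum (s : Finset SeqIdx) (ω : Ω) :
      Real.exp (-∑ x ∈ s, Δ x ω) = Real.exp (-1 * (∑ x ∈ s, Δ x) ω) := by
    rw [Finset.sum_apply, neg_one_mul]
  simp only [treeSum_eq_sum_exp_neg_predecessors, exp_neg_sum]
  calc ∫ ω, ∑ i : Fin k → Fin r,
        Real.exp (-1 * (∑ x ∈ predecessors fun ℓ => (i ℓ : ℕ), Δ x) ω) ∂μ
      = ∑ i : Fin k → Fin r, mgf (∑ x ∈ predecessors fun ℓ => (i ℓ : ℕ), Δ x) μ (-1) :=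
        integral_finsetSum _ fun _ _ =>
          mem_integrableExpSet_sum_of_iIndepFun hindep hmeas fun x _ => hint x
    _ = ∑ i : Fin k → Fin r, q ^ #(predecessors fun ℓ => (i ℓ : ℕ)) := by
        simp only [hindep.mgf_sum₀ hmeas, hq, prod_const]
    _ = (∑ j ∈ range r, q ^ (j + 1)) ^ k := sum_pow_card_predecessors q k r

end Expectation

theorem sum_range_inv_two_pow_succ (r : ℕ) :
    ∑ j ∈ range r, (2⁻¹ : ℝ) ^ (j + 1) = 1 - 2⁻¹ ^ r := by
  rw [← geom_sum_mul_neg, sum_mul]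
  exact sum_congr rfl fun j _ => by ring

/-- For i.i.d. rate-1 exponentials `Δ` indexed by finite nonempty sequences of positive
integers, `E[Z_{k,r}] = (1 - 2^{-r})^k`. -/
theorem expectation_treeSum {Ω : Type*} [MeasurableSpace Ω] (μ : Measure Ω)
    [IsProbabilityMeasure μ] (Δ : SeqIdx → Ω → ℝ)
    (hmeas : ∀ idx, Measurable (Δ idx))
    (hindep : ProbabilityTheory.iIndepFun Δ μ)
    (hdist : ∀ idx, Measure.map (Δ idx) μ = expMeasure)
    (k r : ℕ) (hk : 1 ≤ k) (hr : 1 ≤ r) :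
    ∫ ω, treeSum Δ k r ω ∂μ = (1 - ((2 : ℝ)⁻¹) ^ r) ^ k := by
  have hlaw x : HasLaw (Δ x) expMeasure μ := ⟨(hmeas x).aemeasurable, hdist x⟩
  have hmgf x : mgf (Δ x) μ (-1) = 2⁻¹ := by
    rw [mgf_of_hasLaw_expMeasure (hlaw x) (by norm_num)]
    norm_num
  have hint x := mem_integrableExpSet_of_hasLaw_expMeasure (t := -1) (hlaw x) (by norm_num)
  rw [expectation_treeSum_general hindep hint hmgf, sum_range_inv_two_pow_succ]
end
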